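/- arXiv:nlin/0512074 — 5 statements merged into one kernel-verified Lean document; each statement's English description precedes it below -/
import Mathlib

section
/- Let (S^1,S^2) be a Lax–Sato pair. Then the identity (dS^1∧dS^2)_− = 0 holds if and only if the Lax–Sato equations hold: ∂^1_n S^j = −{(z^n S^2)_+, S^j} and ∂^2_n S^j = {(z^n S^1)_+, S^j} for all n ≥ 0 and j = 1,2, together with {S^1, S^2} = 1. -/
/-!
Common setup for the second heavenly equation hierarchy (Bogdanov–Konopelchenko).

Formal series in `z` with `z`-exponents bounded above are encoded as Hahn series
over `ℤ` in the variable `w = z⁻¹`: the coefficient at `n : ℤ` of `A : LS R` is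
the coefficient of `z^{-n}` of the corresponding series.
-/

noncomputable section

/-- Series in `z` with `z`-exponents bounded above (the coefficient at `n : ℤ`
is the coefficient of `z^{-n}`). -/
abbrev LS (R : Type*) [CommRing R] : Type _ := HahnSeries ℤ R

/-- The variable `z`. -/
def zz {R : Type*} [CommRing R] : LS R := HahnSeries.single (-1 : ℤ) (1 : R)

/-- Constant series. -/
def CC {R : Type*} [CommRing R] (r : R) : LS R := HahnSeries.C r

/-- `tail g = Σ_{k≥0} (g k) · z^{-(k+1)}` : a series in negative powers of `z`. -/
def tail {R : Type*} [CommRing R] (g : ℕ → R) : LS R :=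
  HahnSeries.single (1 : ℤ) (1 : R) * HahnSeries.ofPowerSeries ℤ R (PowerSeries.mk g)

/-- `geom v = 1/(z - v) := Σ_{k≥0} v^k z^{-(k+1)}`. -/
def geom {R : Type*} [CommRing R] (v : R) : LS R := tail fun k => v ^ k

/-- The projection `(·)_-` keeping only negative powers of `z`. -/
def truncMinus {R : Type*} [CommRing R] (A : LS R) : LS R where
  coeff n := if 1 ≤ n then A.coeff n else 0
  isPWO_support' := A.isPWO_support'.mono (fun n hn => by
    by_cases h : (1:ℤ) ≤ n <;> simp_all [Function.mem_support])

/-- The projection `(·)_+` keeping only nonnegative powers of `z`. -/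
def truncPlus {R : Type*} [CommRing R] (A : LS R) : LS R where
  coeff n := if n ≤ 0 then A.coeff n else 0
  isPWO_support' := A.isPWO_support'.mono (fun n hn => by
    by_cases h : n ≤ (0:ℤ) <;> simp_all [Function.mem_support])

/-- A commutative ring equipped with pairwise commuting derivations `∂^{j+1}_n`
(`j : Fin 2`, `n : ℕ`) and distinguished elements `t^{j+1}_n` satisfying
`∂^j_m t^k_n = δ_{jk} δ_{mn}`. -/
structure HeavenlySetting (R : Type*) [CommRing R] where
  d : Fin 2 → ℕ → R → R
  d_add : ∀ j n a b, d j n (a + b) = d j n a + d j n b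
  d_mul : ∀ j n a b, d j n (a * b) = a * d j n b + d j n a * b
  d_comm : ∀ j n k m a, d j n (d k m a) = d k m (d j n a)
  t : Fin 2 → ℕ → R
  d_t : ∀ j n k m, d j n (t k m) = if j = k ∧ n = m then 1 else 0

/-- The data of a Lax–Sato pair: `Sneg j n` is the coefficient `S^{j+1}_{n+1}`
of `z^{-(n+1)}` in `S^{j+1} = Σ_{n≥0} t^{j+1}_n z^n + Σ_{n≥1} S^{j+1}_n z^{-n}`. -/
structure LaxPair (R : Type*) [CommRing R] where
  Sneg : Fin 2 → ℕ → R

namespace HeavenlySetting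

variable {R : Type*} [CommRing R] (H : HeavenlySetting R) (P : LaxPair R)

/-- The coefficient of `z^n` in `S^{j+1}`. -/
def coeffS (j : Fin 2) (n : ℤ) : R :=
  if 0 ≤ n then H.t j n.toNat else P.Sneg j (-n - 1).toNat

/-- The series `∂^{a+1}_m S^{j+1}` (its `z`-exponents are bounded above since
`∂^{a+1}_m t^{j+1}_n = δ_{aj} δ_{mn}`). -/
def dS (a : Fin 2) (m : ℕ) (j : Fin 2) : LS R :=
  HahnSeries.single (-(m : ℤ)) (if a = j then 1 else 0)
    + tail fun k => H.d a m (P.Sneg j k)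

/-- `S^{j+1}_x = ∂^1_0 S^{j+1}`. -/
def Sx (j : Fin 2) : LS R := H.dS P 0 0 j

/-- `S^{j+1}_y = ∂^2_0 S^{j+1}`. -/
def Sy (j : Fin 2) : LS R := H.dS P 1 0 j

/-- The condition `(dS^1 ∧ dS^2)_- = 0`. -/
def WedgeMinusZero : Prop :=
  ∀ a b : Fin 2, ∀ m n : ℕ,
    truncMinus (H.dS P a m 0 * H.dS P b n 1 - H.dS P b n 0 * H.dS P a m 1) = 0

/-- The Lax–Sato equations `∂^1_n S^j = -{(z^n S^2)_+, S^j}`,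
`∂^2_n S^j = {(z^n S^1)_+, S^j}` together with the bracket `{S^1,S^2} = 1`;
here `{f,g} = f_x g_y - f_y g_x` and `((z^n S^k)_+)_x = (z^n (S^k)_x)_+` etc. -/
def LaxSatoEqs : Prop :=
  (∀ n : ℕ, ∀ j : Fin 2,
    H.dS P 0 n j =
      -(truncPlus (zz ^ n * H.Sx P 1) * H.Sy P j
        - truncPlus (zz ^ n * H.Sy P 1) * H.Sx P j)) ∧
  (∀ n : ℕ, ∀ j : Fin 2,
    H.dS P 1 n j =
      truncPlus (zz ^ n * H.Sx P 0) * H.Sy P j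
        - truncPlus (zz ^ n * H.Sy P 0) * H.Sx P j) ∧
  (H.Sx P 0 * H.Sy P 1 - H.Sy P 0 * H.Sx P 1 = 1)

/-- Coefficient of `z'^k` in `D^{a+1}(z') S^{j+1}(z) = Σ_{m≥0} z'^{-m-1} ∂^{a+1}_m S^{j+1}(z)`. -/
def Dc (a j : Fin 2) (k : ℤ) : LS R :=
  if k ≤ -1 then H.dS P a (-k - 1).toNat j else 0

/-- Generating Lax–Sato equations
`(z'-z) D^1(z') S^j(z) = -{S^2(z'), S^j(z)}` and
`(z'-z) D^2(z') S^j(z) = {S^1(z'), S^j(z)}`, stated coefficientwise in `z'`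
(`k : ℤ` being the `z'`-exponent; both sides of each equation are series in `z`). -/
def GenLaxSato : Prop :=
  (∀ j : Fin 2, ∀ k : ℤ,
    H.Dc P 0 j (k - 1) - zz * H.Dc P 0 j k =
      -(CC (H.d 0 0 (H.coeffS P 1 k)) * H.Sy P j
        - CC (H.d 1 0 (H.coeffS P 1 k)) * H.Sx P j)) ∧
  (∀ j : Fin 2, ∀ k : ℤ,
    H.Dc P 1 j (k - 1) - zz * H.Dc P 1 j k =
      CC (H.d 0 0 (H.coeffS P 0 k)) * H.Sy P j
        - CC (H.d 1 0 (H.coeffS P 0 k)) * H.Sx P j)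

/-- `Θ` is a τ-function for the pair: `S^1_{n+1} = -∂^2_n Θ`, `S^2_{n+1} = ∂^1_n Θ`. -/
def IsTau (Θ : R) : Prop :=
  ∀ n : ℕ, P.Sneg 0 n = -H.d 1 n Θ ∧ P.Sneg 1 n = H.d 0 n Θ

/-- `σ` is a wave function with constant parameter `p`:
`(z-p) D^1(z)σ = -{S^2(z), σ}` and `(z-p) D^2(z)σ = {S^1(z), σ}`,
coefficientwise in `z^{-1}`, with `p` annihilated by all derivations. -/
def IsWave (σ p : R) : Prop :=
  (∀ a : Fin 2, ∀ n : ℕ, H.d a n p = 0) ∧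
  ((zz - CC p) * tail (fun n => H.d 0 n σ) =
    -(H.Sx P 1 * CC (H.d 1 0 σ) - H.Sy P 1 * CC (H.d 0 0 σ))) ∧
  ((zz - CC p) * tail (fun n => H.d 1 n σ) =
    H.Sx P 0 * CC (H.d 1 0 σ) - H.Sy P 0 * CC (H.d 0 0 σ))

end HeavenlySetting

/-- The subring of series with no negative powers of `z`. -/
def nonnegSubring (R : Type*) [CommRing R] : Subring (LS R) where
  carrier := {A | ∀ n : ℤ, 1 ≤ n → A.coeff n = 0}
  zero_mem' n _ := rfl
  one_mem' n hn := by
    rw [HahnSeries.coeff_one, if_neg (by omega)]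
  add_mem' hA hB n hn := by
    rw [HahnSeries.coeff_add, hA n hn, hB n hn, add_zero]
  neg_mem' hA n hn := by
    rw [HahnSeries.coeff_neg, hA n hn, neg_zero]
  mul_mem' {A B} hA hB n hn := by
    rw [HahnSeries.coeff_mul]
    refine Finset.sum_eq_zero fun p hp => ?_
    have hsum : p.1 + p.2 = n := (Finset.mem_antidiagonal.mp hp).2.2
    rcases le_or_gt 1 p.1 with h | h
    · rw [hA _ h, zero_mul]
    · rw [hB _ (by omega), mul_zero]

/-- The non-unital subring of series with only negative powers of `z`. -/
def negSubring (R : Type*) [CommRing R] : NonUnitalSubring (LS R) where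
  carrier := {A | ∀ n : ℤ, n ≤ 0 → A.coeff n = 0}
  zero_mem' n _ := rfl
  add_mem' hA hB n hn := by
    rw [HahnSeries.coeff_add, hA n hn, hB n hn, add_zero]
  neg_mem' hA n hn := by
    rw [HahnSeries.coeff_neg, hA n hn, neg_zero]
  mul_mem' {A B} hA hB n hn := by
    rw [HahnSeries.coeff_mul]
    refine Finset.sum_eq_zero fun p hp => ?_
    have hsum : p.1 + p.2 = n := (Finset.mem_antidiagonal.mp hp).2.2
    rcases le_or_gt p.1 0 with h | h
    · rw [hA _ h, zero_mul]
    · rw [hB _ (by omega), mul_zero]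

section Projections

variable {R : Type*} [CommRing R]

theorem truncMinus_eq_zero_iff {A : LS R} :
    truncMinus A = 0 ↔ A ∈ nonnegSubring R := by
  constructor
  · intro h n hn
    have hcoeff : (truncMinus A).coeff n = 0 := by rw [h, HahnSeries.coeff_zero]
    simpa [truncMinus, hn] using hcoeff
  · intro h
    ext n
    by_cases hn : 1 ≤ n
    · simpa [truncMinus, hn] using h n hn
    · simp [truncMinus, hn]

theorem truncPlus_mem_nonnegSubring (A : LS R) : truncPlus A ∈ nonnegSubring R :=
  fun n hn => if_neg (by omega)

theorem eq_zero_of_mem_nonnegSubring_of_mem_negSubring {A : LS R}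
    (hA : A ∈ nonnegSubring R) (hA' : A ∈ negSubring R) : A = 0 := by
  ext n
  rcases le_or_gt n 0 with h | h
  · exact hA' n h
  · exact hA n h

theorem sub_truncPlus_mem_negSubring (A : LS R) : A - truncPlus A ∈ negSubring R := by
  intro n hn
  simp [truncPlus, hn]

/-- `(A)_+` is the unique series without negative powers differing from `A`
by a series in negative powers. -/
theorem truncPlus_eq_of_sub_mem_negSubring {A B : LS R} (hB : B ∈ nonnegSubring R)
    (h : B - A ∈ negSubring R) : truncPlus A = B := by
  refine (sub_eq_zero.mp (eq_zero_of_mem_nonnegSubring_of_mem_negSubring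
    (sub_mem hB (truncPlus_mem_nonnegSubring A)) ?_)).symm
  simpa using add_mem h (sub_truncPlus_mem_negSubring A)

theorem tail_mem_negSubring (g : ℕ → R) : tail g ∈ negSubring R := by
  intro n hn
  rw [tail, HahnSeries.coeff_single_mul, one_mul, HahnSeries.ofPowerSeries_apply]
  refine HahnSeries.embDomain_of_notMem_range ?_
  rintro ⟨k, hk⟩
  have : (k : ℤ) = n - 1 := hk
  omega

theorem zz_pow (n : ℕ) : (zz : LS R) ^ n = HahnSeries.single (-(n : ℤ)) 1 := by
  simp [zz, HahnSeries.single_pow]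

end Projections

namespace HeavenlySetting

variable {R : Type*} [CommRing R] (H : HeavenlySetting R) (P : LaxPair R)

theorem dS_self_sub_mem_negSubring (a : Fin 2) (m : ℕ) :
    H.dS P a m a - zz ^ m ∈ negSubring R := by
  rw [dS, zz_pow, if_pos rfl, add_sub_cancel_left]
  exact tail_mem_negSubring _

theorem dS_mem_negSubring_of_ne {a j : Fin 2} (h : a ≠ j) (m : ℕ) :
    H.dS P a m j ∈ negSubring R := by
  rw [dS, if_neg h, HahnSeries.single_eq_zero, zero_add]
  exact tail_mem_negSubring _

theorem Sx_zero_sub_one_mem_negSubring : H.Sx P 0 - 1 ∈ negSubring R := by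
  simpa [Sx] using H.dS_self_sub_mem_negSubring P 0 0

theorem Sy_one_sub_one_mem_negSubring : H.Sy P 1 - 1 ∈ negSubring R := by
  simpa [Sy] using H.dS_self_sub_mem_negSubring P 1 0

theorem Sx_one_mem_negSubring : H.Sx P 1 ∈ negSubring R :=
  H.dS_mem_negSubring_of_ne P (by decide) 0

theorem Sy_zero_mem_negSubring : H.Sy P 0 ∈ negSubring R :=
  H.dS_mem_negSubring_of_ne P (by decide) 0

variable {H P}

theorem WedgeMinusZero.mem (h : H.WedgeMinusZero P) (a b : Fin 2) (m n : ℕ) :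
    H.dS P a m 0 * H.dS P b n 1 - H.dS P b n 0 * H.dS P a m 1 ∈ nonnegSubring R :=
  truncMinus_eq_zero_iff.mp (h a b m n)

theorem WedgeMinusZero.bracket_eq_one (h : H.WedgeMinusZero P) :
    H.Sx P 0 * H.Sy P 1 - H.Sy P 0 * H.Sx P 1 = 1 := by
  refine sub_eq_zero.mp (eq_zero_of_mem_nonnegSubring_of_mem_negSubring
    (sub_mem (h.mem 0 1 0 0) (one_mem _)) ?_)
  have hx0 := H.Sx_zero_sub_one_mem_negSubring P
  have hy1 := H.Sy_one_sub_one_mem_negSubring P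
  have key := sub_mem (add_mem (add_mem (mul_mem hx0 hy1) hx0) hy1)
    (mul_mem (H.Sy_zero_mem_negSubring P) (H.Sx_one_mem_negSubring P))
  convert key using 1
  simp only [Sx, Sy]
  ring

theorem WedgeMinusZero.laxSatoEqs (h : H.WedgeMinusZero P) : H.LaxSatoEqs P := by
  have hJ := h.bracket_eq_one
  have hx0 := H.Sx_zero_sub_one_mem_negSubring P
  have hy1 := H.Sy_one_sub_one_mem_negSubring P
  have hx1 := H.Sx_one_mem_negSubring P
  have hy0 := H.Sy_zero_mem_negSubring P
  refine ⟨fun n => ?_, fun n => ?_, hJ⟩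
  · have hA := H.dS_self_sub_mem_negSubring P 0 n
    have hB := H.dS_mem_negSubring_of_ne P (show (0 : Fin 2) ≠ 1 by decide) n
    have hplus_y : truncPlus (zz ^ n * H.Sy P 1) =
        H.dS P 0 n 0 * H.Sy P 1 - H.Sy P 0 * H.dS P 0 n 1 := by
      refine truncPlus_eq_of_sub_mem_negSubring (h.mem 0 1 n 0) ?_
      convert sub_mem (add_mem (mul_mem hA hy1) hA) (mul_mem hy0 hB) using 1
      simp only [Sy]
      ring
    have hplus_x : truncPlus (zz ^ n * H.Sx P 1) =
        H.dS P 0 n 0 * H.Sx P 1 - H.Sx P 0 * H.dS P 0 n 1 := by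
      refine truncPlus_eq_of_sub_mem_negSubring (h.mem 0 0 n 0) ?_
      convert sub_mem (mul_mem hA hx1) (add_mem (mul_mem hx0 hB) hB) using 1
      simp only [Sx]
      ring
    rw [hplus_x, hplus_y, Fin.forall_fin_two]
    constructor
    · linear_combination (-H.dS P 0 n 0) * hJ
    · linear_combination (-H.dS P 0 n 1) * hJ
  · have hA := H.dS_mem_negSubring_of_ne P (show (1 : Fin 2) ≠ 0 by decide) n
    have hB := H.dS_self_sub_mem_negSubring P 1 n
    have hplus_y : truncPlus (zz ^ n * H.Sy P 0) =
        H.Sy P 0 * H.dS P 1 n 1 - H.dS P 1 n 0 * H.Sy P 1 := by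
      refine truncPlus_eq_of_sub_mem_negSubring (h.mem 1 1 0 n) ?_
      convert sub_mem (mul_mem hy0 hB) (add_mem (mul_mem hA hy1) hA) using 1
      simp only [Sy]
      ring
    have hplus_x : truncPlus (zz ^ n * H.Sx P 0) =
        H.Sx P 0 * H.dS P 1 n 1 - H.dS P 1 n 0 * H.Sx P 1 := by
      refine truncPlus_eq_of_sub_mem_negSubring (h.mem 0 1 0 n) ?_
      convert sub_mem (add_mem (mul_mem hx0 hB) hB) (mul_mem hA hx1) using 1
      simp only [Sx]
      ring
    rw [hplus_x, hplus_y, Fin.forall_fin_two]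
    constructor
    · linear_combination (-H.dS P 1 n 0) * hJ
    · linear_combination (-H.dS P 1 n 1) * hJ

/-- Under the Lax–Sato equations every `∂^{a+1}_m` acts on both series as a vector field in
`x`, `y` whose coefficients have no negative powers of `z`. -/
theorem LaxSatoEqs.exists_dS_eq (h : H.LaxSatoEqs P) (a : Fin 2) (m : ℕ) :
    ∃ α ∈ nonnegSubring R, ∃ β ∈ nonnegSubring R,
      ∀ j, H.dS P a m j = α * H.Sx P j + β * H.Sy P j := by
  revert a
  rw [Fin.forall_fin_two]
  constructor
  · refine ⟨_, truncPlus_mem_nonnegSubring (zz ^ m * H.Sy P 1), _,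
      neg_mem (truncPlus_mem_nonnegSubring (zz ^ m * H.Sx P 1)), fun j => ?_⟩
    rw [h.1 m j]
    ring
  · refine ⟨_, neg_mem (truncPlus_mem_nonnegSubring (zz ^ m * H.Sy P 0)), _,
      truncPlus_mem_nonnegSubring (zz ^ m * H.Sx P 0), fun j => ?_⟩
    rw [h.2.1 m j]
    ring

theorem LaxSatoEqs.wedgeMinusZero (h : H.LaxSatoEqs P) : H.WedgeMinusZero P := by
  intro a b m n
  obtain ⟨α, hα, β, hβ, hS⟩ := h.exists_dS_eq a m
  obtain ⟨γ, hγ, δ, hδ, hT⟩ := h.exists_dS_eq b n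
  rw [truncMinus_eq_zero_iff, hS, hS, hT, hT]
  convert sub_mem (mul_mem hα hδ) (mul_mem hβ hγ) using 1
  linear_combination (α * δ - β * γ) * h.2.2

end HeavenlySetting

/-- For a Lax–Sato pair, `(dS^1 ∧ dS^2)_- = 0` holds iff the
Lax–Sato equations hold together with `{S^1, S^2} = 1`. -/
theorem heavenly_wedgeMinus_iff_laxSato {R : Type*} [CommRing R]
    (H : HeavenlySetting R) (P : LaxPair R) :
    H.WedgeMinusZero P ↔ H.LaxSatoEqs P := by
  exact ⟨fun h => h.laxSatoEqs, fun h => h.wedgeMinusZero⟩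
end
end

section
/- Let (S^1,S^2) be a Lax–Sato pair satisfying (dS^1∧dS^2)_− = 0. Define the components of the one-form θ by θ_{t^1_n} := Res(z^n S^2_−) = S^2_{n+1} and θ_{t^2_n} := −Res(z^n S^1_−) = −S^1_{n+1} for all n ≥ 0, where Res denotes the coefficient of z^{−1}. Then θ is closed: ∂_a θ_b = ∂_b θ_a for every two time variables a, b (i.e. for every two derivations ∂_a, ∂_b ∈ {∂^1_n, ∂^2_n : n ≥ 0}, with θ_a, θ_b the corresponding components). -/
/-!
Common setup for the second heavenly equation hierarchy (Bogdanov–Konopelchenko).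

Formal series in `z` with `z`-exponents bounded above are encoded as Hahn series
over `ℤ` in the variable `w = z⁻¹`: the coefficient at `n : ℤ` of `A : LS R` is
the coefficient of `z^{-n}` of the corresponding series.
-/

noncomputable section

theorem coeff_tail {R : Type*} [CommRing R] (g : ℕ → R) (k : ℕ) :
    (tail g).coeff (1 + (k : ℤ)) = g k := by
  rw [tail, add_comm, HahnSeries.coeff_single_mul_add, one_mul,
    HahnSeries.ofPowerSeries_apply_coeff, PowerSeries.coeff_mk]

theorem coeff_one_single_mul_tail {R : Type*} [CommRing R] (r : R) (g : ℕ → R) (m : ℕ) :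
    (HahnSeries.single (-(m : ℤ)) r * tail g).coeff 1 = r * g m := by
  have h := HahnSeries.coeff_single_mul_add (r := r) (x := tail g) (a := 1 + (m : ℤ))
    (b := -(m : ℤ))
  rwa [add_neg_cancel_right, coeff_tail] at h

/-- A product of two tails starts at `z^{-2}`. -/
theorem coeff_one_tail_mul_tail {R : Type*} [CommRing R] (f g : ℕ → R) :
    (tail f * tail g).coeff 1 = 0 := by
  rw [tail, tail, mul_mul_mul_comm, HahnSeries.single_mul_single, ← map_mul]
  have h := HahnSeries.coeff_single_mul_add (r := (1 * 1 : R))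
    (x := HahnSeries.ofPowerSeries ℤ R (PowerSeries.mk f * PowerSeries.mk g)) (a := -1)
    (b := 1 + 1)
  rw [show (-1 : ℤ) + (1 + 1) = 1 by norm_num] at h
  rw [h, HahnSeries.ofPowerSeries_apply, HahnSeries.embDomain_of_notMem_range, mul_zero]
  rintro ⟨k, hk⟩
  simp at hk

namespace HeavenlySetting

theorem d_neg {R : Type*} [CommRing R] (H : HeavenlySetting R) (j : Fin 2) (n : ℕ) (r : R) :
    H.d j n (-r) = -H.d j n r :=
  map_neg (AddMonoidHom.mk' (H.d j n) (H.d_add j n)) r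

theorem coeff_one_dS_mul_dS {R : Type*} [CommRing R] (H : HeavenlySetting R) (P : LaxPair R)
    (a b i j : Fin 2) (m n : ℕ) :
    (H.dS P a m i * H.dS P b n j).coeff 1 =
      (if a = i then 1 else 0) * H.d b n (P.Sneg j m)
        + (if b = j then 1 else 0) * H.d a m (P.Sneg i n) := by
  have hs : (1 : ℤ) ≠ -(m : ℤ) + -(n : ℤ) := by omega
  rw [dS, dS, add_mul, mul_add, mul_add, mul_comm (tail _) (HahnSeries.single _ _),
    HahnSeries.single_mul_single]
  simp only [HahnSeries.coeff_add, coeff_one_single_mul_tail, coeff_one_tail_mul_tail,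
    HahnSeries.coeff_single_of_ne hs, zero_add, add_zero]

end HeavenlySetting

/-- If `(dS^1 ∧ dS^2)_- = 0`, the one-form `θ` with components
`θ_{t^1_n} = S^2_{n+1}` and `θ_{t^2_n} = -S^1_{n+1}` is closed:
`∂_a θ_b = ∂_b θ_a` for all time variables `a = (a,m)`, `b = (b,n)`. -/
theorem heavenly_one_form_closed {R : Type*} [CommRing R]
    (H : HeavenlySetting R) (P : LaxPair R)
    (hwedge : H.WedgeMinusZero P) :
    ∀ a b : Fin 2, ∀ m n : ℕ,
      H.d a m (if b = 0 then P.Sneg 1 n else -P.Sneg 0 n)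
        = H.d b n (if a = 0 then P.Sneg 1 m else -P.Sneg 0 m) := by
  intro a b m n
  have h := congrArg (fun A : LS R => A.coeff 1) (hwedge a b m n)
  simp only [truncMinus, le_refl, if_true, HahnSeries.coeff_sub, HahnSeries.coeff_zero,
    H.coeff_one_dS_mul_dS] at h
  fin_cases a <;> fin_cases b <;> simp [H.d_neg, -neg_inj] at h ⊢ <;> linear_combination -h
end
end

section
/- Let (S^1,S^2) be a Lax–Sato pair with {S^1,S^2} = 1 which admits a τ-function Θ. Then Θ satisfies the generating heavenly equation: D^2(z)Θ_x − D^1(z)Θ_y − {D^1(z)Θ, D^2(z)Θ} = 0, coefficientwise in powers of z^{−1}. -/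
/-!
Common setup for the second heavenly equation hierarchy (Bogdanov–Konopelchenko).

Formal series in `z` with `z`-exponents bounded above are encoded as Hahn series
over `ℤ` in the variable `w = z⁻¹`: the coefficient at `n : ℤ` of `A : LS R` is
the coefficient of `z^{-n}` of the corresponding series.
-/

noncomputable section

/-- The series `tail` is compatible with negation. -/
theorem tail_neg {R : Type*} [CommRing R] (g : ℕ → R) :
    tail (fun n => -g n) = -tail g := by
  have h : PowerSeries.mk (fun n => -g n) = -PowerSeries.mk g := by
    ext n
    simp
  rw [tail, tail, h, map_neg, mul_neg]

/-- If a Lax–Sato pair satisfies `{S^1,S^2} = 1` and admits a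
τ-function `Θ`, then `Θ` satisfies the generating heavenly equation
`D^2(z)Θ_x - D^1(z)Θ_y - {D^1(z)Θ, D^2(z)Θ} = 0` (coefficientwise in `z^{-1}`). -/
theorem heavenly_generating_equation {R : Type*} [CommRing R]
    (H : HeavenlySetting R) (P : LaxPair R) (Θ : R)
    (hτ : H.IsTau P Θ)
    (hbr : H.Sx P 0 * H.Sy P 1 - H.Sy P 0 * H.Sx P 1 = 1) :
    tail (fun n => H.d 1 n (H.d 0 0 Θ)) - tail (fun n => H.d 0 n (H.d 1 0 Θ))
      - (tail (fun n => H.d 0 0 (H.d 0 n Θ)) * tail (fun n => H.d 1 0 (H.d 1 n Θ))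
         - tail (fun n => H.d 1 0 (H.d 0 n Θ)) * tail (fun n => H.d 0 0 (H.d 1 n Θ))) = 0 := by
  have hneg : ∀ a n r, H.d a n (-r) = -H.d a n r := fun a n r =>
    map_neg (AddMonoidHom.mk' (H.d a n) (H.d_add a n)) r
  simp only [HeavenlySetting.Sx, HeavenlySetting.Sy, HeavenlySetting.dS, (hτ _).1, (hτ _).2,
    hneg, tail_neg, Nat.cast_zero, neg_zero, zero_ne_one, one_ne_zero, if_true, if_false,
    HahnSeries.single_zero_one, map_zero, zero_add] at hbr
  simp only [H.d_comm 1 _ 0 0 Θ, H.d_comm 0 _ 1 0 Θ]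
  linear_combination -hbr
end
end

section
/- Let Θ ∈ R satisfy the generating heavenly equation D^2(z)Θ_x − D^1(z)Θ_y − {D^1(z)Θ, D^2(z)Θ} = 0 coefficientwise in powers of z^{−1}. Then Θ satisfies the second heavenly equation Θ_{ty} − Θ_{t̃x} − (Θ_{xy})^2 + Θ_{xx}Θ_{yy} = 0, where ∂_t := ∂^1_1 and ∂_t̃ := ∂^2_1. More precisely, the coefficient of z^{−2} on the left-hand side of the generating equation equals −(Θ_{ty} − Θ_{t̃x} − (Θ_{xy})^2 + Θ_{xx}Θ_{yy}). -/
/-!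
Common setup for the second heavenly equation hierarchy (Bogdanov–Konopelchenko).

Formal series in `z` with `z`-exponents bounded above are encoded as Hahn series
over `ℤ` in the variable `w = z⁻¹`: the coefficient at `n : ℤ` of `A : LS R` is
the coefficient of `z^{-n}` of the corresponding series.
-/

noncomputable section

/-- The coefficient of `z^{-(n+1)}` in `tail g` is `g n`. -/
theorem coeff_tail_add_one {R : Type*} [CommRing R] (g : ℕ → R) (n : ℕ) :
    (tail g).coeff ((n : ℤ) + 1) = g n := by
  rw [tail, HahnSeries.coeff_single_mul_add, one_mul, HahnSeries.ofPowerSeries_apply_coeff,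
    PowerSeries.coeff_mk]

/-- The leading coefficient, at `z^{-2}`, of a product of two series in negative powers of `z`. -/
theorem coeff_tail_mul_tail_two {R : Type*} [CommRing R] (g h : ℕ → R) :
    (tail g * tail h).coeff 2 = g 0 * h 0 := by
  have key : tail g * tail h = HahnSeries.single (2 : ℤ) (1 : R) *
      HahnSeries.ofPowerSeries ℤ R (PowerSeries.mk g * PowerSeries.mk h) := by
    rw [tail, tail, mul_mul_mul_comm, HahnSeries.single_mul_single, one_mul, ← map_mul,
      one_add_one_eq_two]
  have coeff_eq := HahnSeries.coeff_single_mul_add (r := (1 : R))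
    (x := HahnSeries.ofPowerSeries ℤ R (PowerSeries.mk g * PowerSeries.mk h))
    (a := ((0 : ℕ) : ℤ)) (b := 2)
  rw [HahnSeries.ofPowerSeries_apply_coeff, Nat.cast_zero, zero_add] at coeff_eq
  rw [key, coeff_eq]
  simp

/-- If `Θ` satisfies the generating heavenly equation, then it
satisfies the second heavenly equation `Θ_{ty} - Θ_{t̃x} - Θ_{xy}² + Θ_{xx}Θ_{yy} = 0`;
more precisely, the coefficient of `z^{-2}` of the left-hand side of the generating
equation equals `-(Θ_{ty} - Θ_{t̃x} - Θ_{xy}² + Θ_{xx}Θ_{yy})`. -/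
theorem heavenly_second_heavenly_equation {R : Type*} [CommRing R]
    (H : HeavenlySetting R) (Θ : R)
    (hgen : tail (fun n => H.d 1 n (H.d 0 0 Θ)) - tail (fun n => H.d 0 n (H.d 1 0 Θ))
      - (tail (fun n => H.d 0 0 (H.d 0 n Θ)) * tail (fun n => H.d 1 0 (H.d 1 n Θ))
         - tail (fun n => H.d 1 0 (H.d 0 n Θ)) * tail (fun n => H.d 0 0 (H.d 1 n Θ))) = 0) :
    (tail (fun n => H.d 1 n (H.d 0 0 Θ)) - tail (fun n => H.d 0 n (H.d 1 0 Θ))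
      - (tail (fun n => H.d 0 0 (H.d 0 n Θ)) * tail (fun n => H.d 1 0 (H.d 1 n Θ))
         - tail (fun n => H.d 1 0 (H.d 0 n Θ)) * tail (fun n => H.d 0 0 (H.d 1 n Θ)))).coeff 2
      = -(H.d 0 1 (H.d 1 0 Θ) - H.d 1 1 (H.d 0 0 Θ)
          - (H.d 0 0 (H.d 1 0 Θ)) ^ 2 + H.d 0 0 (H.d 0 0 Θ) * H.d 1 0 (H.d 1 0 Θ))
    ∧ H.d 0 1 (H.d 1 0 Θ) - H.d 1 1 (H.d 0 0 Θ)
        - (H.d 0 0 (H.d 1 0 Θ)) ^ 2 + H.d 0 0 (H.d 0 0 Θ) * H.d 1 0 (H.d 1 0 Θ) = 0 := by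
  have coeff_two (g : ℕ → R) : (tail g).coeff 2 = g 1 := coeff_tail_add_one g 1
  refine (and_iff_left_of_imp fun hcoeff => ?_).2 ?_
  · rwa [hgen, HahnSeries.coeff_zero, zero_eq_neg] at hcoeff
  · simp only [HahnSeries.coeff_sub, coeff_two, coeff_tail_mul_tail_two]
    rw [H.d_comm 1 0 0 0 Θ]
    ring
end
end

section
/- Let (S^1,S^2) be a Lax–Sato pair satisfying the generating Lax–Sato equations, and let σ ∈ R be a wave function with constant parameter p, i.e. (z−p) D^1(z)σ = −{S^2(z), σ} and (z−p) D^2(z)σ = {S^1(z), σ} coefficientwise in z^{−1}. Then {S^1(z), D^1(z)σ} + {S^2(z), D^2(z)σ} = 0 coefficientwise in z^{−1}. -/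
/-!
Common setup for the second heavenly equation hierarchy (Bogdanov–Konopelchenko).

Formal series in `z` with `z`-exponents bounded above are encoded as Hahn series
over `ℤ` in the variable `w = z⁻¹`: the coefficient at `n : ℤ` of `A : LS R` is
the coefficient of `z^{-n}` of the corresponding series.
-/

noncomputable section

namespace HeavenlySetting

variable {R : Type*} [CommRing R]

lemma tail_eq_ofPowerSeries (g : ℕ → R) :
    tail g = HahnSeries.ofPowerSeries ℤ R (PowerSeries.X * PowerSeries.mk g) := by
  rw [map_mul, HahnSeries.ofPowerSeries_X, tail]

lemma zz_mul_tail (g : ℕ → R) :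
    zz * tail g = HahnSeries.ofPowerSeries ℤ R (PowerSeries.mk g) := by
  rw [tail, zz, ← mul_assoc, HahnSeries.single_mul_single]
  simp

lemma CC_eq_ofPowerSeries (r : R) :
    CC r = HahnSeries.ofPowerSeries ℤ R (PowerSeries.C r) := by
  rw [HahnSeries.ofPowerSeries_C, CC]

lemma tail_coeff_zero (g : ℕ → R) : (tail g).coeff 0 = 0 := by
  rw [tail_eq_ofPowerSeries,
    show (0 : ℤ) = ((0 : ℕ) : ℤ) from rfl, HahnSeries.ofPowerSeries_apply_coeff]
  simp

lemma zz_mul_coeff (A : LS R) (n : ℤ) : (zz * A).coeff n = A.coeff (n + 1) := by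
  have h := HahnSeries.coeff_single_mul_add (r := (1 : R)) (x := A) (a := n + 1) (b := (-1 : ℤ))
  rw [add_neg_cancel_right, one_mul] at h
  exact h

variable (H : HeavenlySetting R) (P : LaxPair R)

/-- The derivation `∂^{a+1}_n` acting coefficientwise on power series. -/
def coeffDerivation (a : Fin 2) (n : ℕ) : PowerSeries R →+ PowerSeries R :=
  AddMonoidHom.mk' (fun f => PowerSeries.mk fun i => H.d a n (PowerSeries.coeff i f))
    (fun f g => by ext i; simp [H.d_add])

lemma coeffDerivation_mul (a : Fin 2) (n : ℕ) (f g : PowerSeries R) :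
    H.coeffDerivation a n (f * g) =
      f * H.coeffDerivation a n g + H.coeffDerivation a n f * g := by
  have hsum : ∀ (s : Finset (ℕ × ℕ)) (u : ℕ × ℕ → R),
      H.d a n (∑ i ∈ s, u i) = ∑ i ∈ s, H.d a n (u i) := fun s u =>
    map_sum (AddMonoidHom.mk' (H.d a n) (H.d_add a n)) u s
  ext i
  simp only [coeffDerivation, AddMonoidHom.mk'_apply, PowerSeries.coeff_mk, map_add,
    PowerSeries.coeff_mul, hsum, H.d_mul, Finset.sum_add_distrib]

lemma coeffDerivation_mk (a : Fin 2) (n : ℕ) (g : ℕ → R) :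
    H.coeffDerivation a n (PowerSeries.mk g) = PowerSeries.mk fun i => H.d a n (g i) := by
  ext i; simp [coeffDerivation]

lemma d_zero (a : Fin 2) (n : ℕ) : H.d a n 0 = 0 :=
  map_zero (AddMonoidHom.mk' (H.d a n) (H.d_add a n))

lemma coeffDerivation_C (a : Fin 2) (n : ℕ) (r : R) :
    H.coeffDerivation a n (PowerSeries.C r) = PowerSeries.C (H.d a n r) := by
  ext i
  by_cases hi : i = 0 <;> simp [coeffDerivation, PowerSeries.coeff_C, hi, H.d_zero]

lemma d_one (a : Fin 2) (n : ℕ) : H.d a n 1 = 0 := by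
  simpa using H.d_mul a n 1 1

lemma coeffDerivation_one (a : Fin 2) (n : ℕ) :
    H.coeffDerivation a n 1 = 0 := by
  rw [← map_one PowerSeries.C, coeffDerivation_C, d_one, map_zero]

lemma coeffDerivation_X (a : Fin 2) (n : ℕ) :
    H.coeffDerivation a n (PowerSeries.X : PowerSeries R) = 0 := by
  ext i
  by_cases hi : i = 1 <;> simp [coeffDerivation, PowerSeries.coeff_X, hi, H.d_zero, H.d_one]

/-- The series `∂^{a+1}_0 S^{j+1}` as a power series in `z⁻¹`. -/
def gradS (a j : Fin 2) : PowerSeries R :=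
  PowerSeries.mk fun i => H.d a 0 (H.coeffS P j (-(i : ℤ)))

lemma dS_zero_eq_ofPowerSeries (a j : Fin 2) :
    H.dS P a 0 j = HahnSeries.ofPowerSeries ℤ R (H.gradS P a j) := by
  have hsingle : (HahnSeries.single (-((0 : ℕ) : ℤ)) (if a = j then (1 : R) else 0)) =
      HahnSeries.ofPowerSeries ℤ R (PowerSeries.C (if a = j then (1 : R) else 0)) := by
    rw [HahnSeries.ofPowerSeries_C]; rfl
  rw [dS, tail_eq_ofPowerSeries, hsingle, ← map_add]
  congr 1
  ext i
  cases i with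
  | zero => simp [gradS, coeffS, H.d_t]
  | succ i =>
    have h : ¬ (0 : ℤ) ≤ -((i + 1 : ℕ) : ℤ) := by lia
    have h' : (-(-((i + 1 : ℕ) : ℤ)) - 1).toNat = i := by lia
    rw [gradS, PowerSeries.coeff_mk, coeffS, if_neg h, h', map_add, PowerSeries.coeff_succ_X_mul,
      PowerSeries.coeff_mk]
    rw [PowerSeries.coeff_C, if_neg i.succ_ne_zero, zero_add]

lemma coeffDerivation_gradS_comm (a b j : Fin 2) :
    H.coeffDerivation a 0 (H.gradS P b j) = H.coeffDerivation b 0 (H.gradS P a j) := by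
  simp only [gradS, coeffDerivation_mk]
  exact congrArg _ (funext fun i => H.d_comm _ _ _ _ _)

lemma dS_coeff_zero (n : ℕ) : (H.dS P 0 n 0).coeff 0 = if n = 0 then 1 else 0 := by
  rw [dS, HahnSeries.coeff_add, tail_coeff_zero, add_zero, HahnSeries.coeff_single]
  simp [eq_comm]

/-- The generating Lax–Sato equations force `{S^1, S^2} = 1`. -/
lemma GenLaxSato.bracket_eq_one {H : HeavenlySetting R} {P : LaxPair R} (h : H.GenLaxSato P) :
    H.gradS P 0 0 * H.gradS P 1 1 - H.gradS P 1 0 * H.gradS P 0 1 = 1 := by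
  ext n
  -- `u i` is the coefficient of `z'^{-i} z^{i-n-1}` in `D^1(z') S^1(z)`.
  let u : ℕ → R := fun i => (H.Dc P 0 0 (-(i : ℤ))).coeff ((n : ℤ) - i + 1)
  have hterm : ∀ i ∈ Finset.range (n + 1),
      PowerSeries.coeff i (H.gradS P 1 1) * PowerSeries.coeff (n - i) (H.gradS P 0 0) -
        PowerSeries.coeff i (H.gradS P 0 1) * PowerSeries.coeff (n - i) (H.gradS P 1 0) =
      u (i + 1) - u i := by
    intro i hi
    have hin : ((n - i : ℕ) : ℤ) = (n : ℤ) - i := by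
      have := Finset.mem_range.mp hi
      lia
    have hE := congrArg (fun A => HahnSeries.coeff A ((n - i : ℕ) : ℤ)) (h.1 0 (-(i : ℤ)))
    simp only [HahnSeries.coeff_sub, HahnSeries.coeff_neg, zz_mul_coeff, Sx, Sy,
      dS_zero_eq_ofPowerSeries, CC, HahnSeries.C_mul_eq_smul, HahnSeries.coeff_smul,
      HahnSeries.ofPowerSeries_apply_coeff, smul_eq_mul] at hE
    simp only [u]
    rw [hin] at hE
    rw [show (-((i + 1 : ℕ) : ℤ)) = -(i : ℤ) - 1 by lia,
      show (n : ℤ) - ((i + 1 : ℕ) : ℤ) + 1 = n - i by lia, hE]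
    simp only [gradS, PowerSeries.coeff_mk]
    ring
  have hlast : u (n + 1) = if n = 0 then 1 else 0 := by
    have h1 : -((n + 1 : ℕ) : ℤ) ≤ -1 := by lia
    have h2 : (-(-((n + 1 : ℕ) : ℤ)) - 1).toNat = n := by lia
    have h3 : (n : ℤ) - ((n + 1 : ℕ) : ℤ) + 1 = 0 := by lia
    simp only [u, Dc]
    rw [if_pos h1, h2, h3, dS_coeff_zero]
  have hfirst : u 0 = 0 := by simp [u, Dc]
  rw [mul_comm, mul_comm (H.gradS P 1 0), map_sub, PowerSeries.coeff_mul, PowerSeries.coeff_mul,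
    ← Finset.sum_sub_distrib, Finset.Nat.sum_antidiagonal_eq_sum_range_succ_mk,
    Finset.sum_congr rfl hterm, Finset.sum_range_sub, hlast, hfirst, sub_zero,
    PowerSeries.coeff_one]

lemma zz_sub_CC_mul_tail (p : R) (g : ℕ → R) :
    (zz - CC p) * tail g =
      HahnSeries.ofPowerSeries ℤ R
        ((1 - PowerSeries.C p * PowerSeries.X) * PowerSeries.mk g) := by
  rw [sub_mul, zz_mul_tail, tail_eq_ofPowerSeries, CC_eq_ofPowerSeries, ← map_mul, ← map_sub]
  congr 1
  ring

lemma isUnit_one_sub_C_mul_X (p : R) :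
    IsUnit (1 - PowerSeries.C p * PowerSeries.X : PowerSeries R) := by
  rw [PowerSeries.isUnit_iff_constantCoeff]
  simp

end HeavenlySetting

open HeavenlySetting

/-- If the pair satisfies the generating Lax–Sato equations and
`σ` is a wave function with constant parameter `p`, then
`{S^1(z), D^1(z)σ} + {S^2(z), D^2(z)σ} = 0` coefficientwise in `z^{-1}`. -/
theorem heavenly_wave_cross_derivative {R : Type*} [CommRing R]
    (H : HeavenlySetting R) (P : LaxPair R)
    (hgen : H.GenLaxSato P) (σ p : R) (hwave : H.IsWave P σ p) :
    H.Sx P 0 * tail (fun n => H.d 1 0 (H.d 0 n σ))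
      - H.Sy P 0 * tail (fun n => H.d 0 0 (H.d 0 n σ))
      + (H.Sx P 1 * tail (fun n => H.d 1 0 (H.d 1 n σ))
        - H.Sy P 1 * tail (fun n => H.d 0 0 (H.d 1 n σ))) = 0 := by
  obtain ⟨hp, hw1, hw2⟩ := hwave
  have hinj := HahnSeries.ofPowerSeries_injective (Γ := ℤ) (R := R)
  rw [zz_sub_CC_mul_tail] at hw1 hw2
  simp only [Sx, Sy, dS_zero_eq_ofPowerSeries, CC_eq_ofPowerSeries,
    ← map_mul, ← map_sub, ← map_neg] at hw1 hw2
  replace hw1 := hinj hw1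
  replace hw2 := hinj hw2
  simp only [Sx, Sy, dS_zero_eq_ofPowerSeries, tail_eq_ofPowerSeries, ← map_mul, ← map_sub,
    ← map_add, ← coeffDerivation_mk]
  rw [← map_zero (HahnSeries.ofPowerSeries ℤ R)]
  congr 1
  have hbr := hgen.bracket_eq_one
  have hbr' : ∀ a, H.coeffDerivation a 0 _ = H.coeffDerivation a 0 _ := fun a => congrArg _ hbr
  have hw1' : ∀ a, H.coeffDerivation a 0 _ = H.coeffDerivation a 0 _ := fun a => congrArg _ hw1
  have hw2' : ∀ a, H.coeffDerivation a 0 _ = H.coeffDerivation a 0 _ := fun a => congrArg _ hw2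
  simp only [coeffDerivation_mul, map_sub, map_neg, coeffDerivation_one, coeffDerivation_C,
    coeffDerivation_X, hp, map_zero, mul_zero, zero_mul, add_zero, sub_zero]
    at hbr' hw1' hw2'
  have hbr0 := hbr' 0
  have hbr1 := hbr' 1
  have hw10 := hw1' 0
  have hw11 := hw1' 1
  have hw20 := hw2' 0
  have hw21 := hw2' 1
  rw [H.coeffDerivation_gradS_comm P 1 0 0, H.coeffDerivation_gradS_comm P 1 0 1] at hbr1
  rw [H.coeffDerivation_gradS_comm P 1 0 1, H.d_comm 1 0 0 0] at hw11
  rw [H.coeffDerivation_gradS_comm P 1 0 0, H.d_comm 1 0 0 0] at hw21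
  apply (isUnit_one_sub_C_mul_X p).mul_left_cancel
  linear_combination PowerSeries.X * (H.gradS P 0 0 * hw11 - H.gradS P 1 0 * hw10
    + H.gradS P 0 1 * hw21 - H.gradS P 1 1 * hw20
    - PowerSeries.C (H.d 1 0 σ) * hbr0 + PowerSeries.C (H.d 0 0 σ) * hbr1)
end
end
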